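/- Fix positive integers d, D, d_W and n ≥ 1. Let W₁, …, W_n : Fin d_W → Fin d_W → Matrix (Fin d) (Fin d) ℂ all be lower triangular ((W a b) = 0 whenever a < b) with (W_i) 0 0 = 1 for every i. Let B¹, …, Bⁿ : Fin d → Matrix (Fin D) (Fin D) ℂ be arbitrary MPS tensors and let l : Matrix (Fin D) (Fin D) ℂ satisfy the normalization: the trace of l ▷ E_{B¹} ▷ ⋯ ▷ E_{Bⁿ} equals 1. Define the boundary tensor L α a β = (if a = 0 then l α β else 0), and let R : Fin D → Fin d_W → Fin D → ℂ be any boundary tensor with R α 0 β = (if α = β then 1 else 0). Then ∑_{α,a,β} (L ▷ E_{B¹}^{W₁} ▷ ⋯ ▷ E_{Bⁿ}^{W_n}) α a β * R α a β = 1. -/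

import Mathlib

open Matrix

/-- Left action of the MPO transfer matrix `E_A^{[W]}` on a boundary tensor `L`. -/
noncomputable def mpoActL {d D dw : ℕ}
    (A : Fin d → Matrix (Fin D) (Fin D) ℂ)
    (W : Fin dw → Fin dw → Matrix (Fin d) (Fin d) ℂ)
    (L : Fin D → Fin dw → Fin D → ℂ) : Fin D → Fin dw → Fin D → ℂ :=
  fun α' a' β' =>
    ∑ α : Fin D, ∑ a : Fin dw, ∑ β : Fin D, ∑ s : Fin d, ∑ s' : Fin d,
      L α a β * (A s) α α' * (W a a') s s' * (starRingEnd ℂ) ((A s') β β')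

/-- Left action of the bare MPS transfer matrix `E_A` on a matrix `l`. -/
noncomputable def mpsActL {d D : ℕ}
    (A : Fin d → Matrix (Fin D) (Fin D) ℂ)
    (l : Matrix (Fin D) (Fin D) ℂ) : Matrix (Fin D) (Fin D) ℂ :=
  Matrix.of fun α' β' =>
    ∑ α : Fin D, ∑ β : Fin D, ∑ s : Fin d,
      l α β * (A s) α α' * (starRingEnd ℂ) ((A s) β β')

theorem mpoActL_step {d D dW : ℕ}
    (W : Fin (dW + 1) → Fin (dW + 1) → Matrix (Fin d) (Fin d) ℂ)
    (htri : ∀ a b : Fin (dW + 1), a < b → W a b = 0)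
    (h00 : W 0 0 = 1)
    (A : Fin d → Matrix (Fin D) (Fin D) ℂ)
    (l : Matrix (Fin D) (Fin D) ℂ) :
    mpoActL A W (fun α a β => if a = 0 then l α β else 0)
      = fun α a β => if a = 0 then mpsActL A l α β else 0 := by
  funext α' a' β'
  unfold mpoActL mpsActL
  by_cases ha : a' = 0
  · subst ha
    simp only [if_true, Matrix.of_apply]
    refine Finset.sum_congr rfl fun α _ => ?_
    rw [Finset.sum_eq_single 0 (by intro b _ hb; simp [hb]) (by simp)]
    refine Finset.sum_congr rfl fun β _ => Finset.sum_congr rfl fun s _ => ?_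
    rw [Finset.sum_eq_single s (by intro b _ hb; simp [h00, Matrix.one_apply_ne hb.symm])
      (by simp)]
    simp [h00]
  · simp only [ha, if_false]
    refine Finset.sum_eq_zero fun α _ => Finset.sum_eq_zero fun a _ =>
      Finset.sum_eq_zero fun β _ => Finset.sum_eq_zero fun s _ => Finset.sum_eq_zero fun s' _ => ?_
    by_cases h : a = 0
    · subst h
      simp [htri 0 a' (Fin.pos_of_ne_zero ha)]
    · simp [h]

/-- Paper's Lemma 5: `⟨l_{A_R}^{[W]}| (∏ᵢ E_{Bᵢ}^{[Wᵢ]}) |R_Z^{[W]}⟩ = 1`,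
given the normalization `⟨Ψ|Ψ⟩ = 1` (trace of the bare transferred `l` equals one) and
that the right boundary tensor has identity component at MPO index `0`. -/
theorem lemma5_contraction_eq_one
    (d D dW n : ℕ) (hd : 0 < d) (hD : 0 < D) (hn : 1 ≤ n)
    (Ws : Fin n → Fin (dW + 1) → Fin (dW + 1) → Matrix (Fin d) (Fin d) ℂ)
    (hWstri : ∀ (i : Fin n) (a b : Fin (dW + 1)), a < b → Ws i a b = 0)
    (hWs00 : ∀ i : Fin n, Ws i 0 0 = 1)
    (B : Fin n → Fin d → Matrix (Fin D) (Fin D) ℂ)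
    (l : Matrix (Fin D) (Fin D) ℂ)
    (hnorm : ∑ α : Fin D,
      ((List.finRange n).foldl (fun acc i => mpsActL (B i) acc) l) α α = 1)
    (R : Fin D → Fin (dW + 1) → Fin D → ℂ)
    (hR : ∀ α β : Fin D, R α 0 β = if α = β then 1 else 0) :
    ∑ α : Fin D, ∑ a : Fin (dW + 1), ∑ β : Fin D,
        ((List.finRange n).foldl (fun acc i => mpoActL (B i) (Ws i) acc)
          (fun α a β => if a = 0 then l α β else 0)) α a β * R α a β
      = 1 := by
  have key : ∀ (L : List (Fin n)) (l : Matrix (Fin D) (Fin D) ℂ),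
      L.foldl (fun acc i => mpoActL (B i) (Ws i) acc)
          (fun α a β => if a = 0 then l α β else 0)
        = fun α a β => if a = 0 then L.foldl (fun acc i => mpsActL (B i) acc) l α β else 0 := by
    intro L
    induction L with
    | nil => intro l; rfl
    | cons i L ih =>
      intro l
      simp only [List.foldl_cons]
      rw [mpoActL_step (Ws i) (hWstri i) (hWs00 i), ih]
  rw [key, ← hnorm]
  refine Finset.sum_congr rfl fun α _ => ?_
  rw [Finset.sum_eq_single 0 (by intro b _ hb; simp [hb]) (by simp)]
  simp [hR]
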